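/- Let m ≥ 2 and let P₁,…,P_m be pairwise distinct points of S^d. Then the set {P₁,…,P_m} is not hemispherical if and only if the separation center set of P₁,…,P_m is dense in S^d. -/

import Mathlib

open scoped RealInnerProductSpace Pointwise

noncomputable section

/-- Euclidean space `ℝ^{d+1}`. -/
abbrev E (d : ℕ) : Type := EuclideanSpace ℝ (Fin (d + 1))

/-- The unit sphere `S^d ⊆ ℝ^{d+1}`. -/
def sph (d : ℕ) : Set (E d) := {x | ‖x‖ = 1}

/-- The closed hemisphere `H(P)` centered at `P`. -/
def hemi {d : ℕ} (P : E d) : Set (E d) := {Q ∈ sph d | 0 ≤ ⟪P, Q⟫}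

/-- The spherical polar set `W°`. -/
def polar {d : ℕ} (W : Set (E d)) : Set (E d) := {Q ∈ sph d | ∀ P ∈ W, 0 ≤ ⟪P, Q⟫}

/-- The semi-separation center set `𝒞(W₁, W₂)`. -/
def ssc {d : ℕ} (W₁ W₂ : Set (E d)) : Set (E d) :=
  {P ∈ sph d | (∀ Q ∈ W₁, 0 ≤ ⟪P, Q⟫) ∧ ∀ R ∈ W₂, ⟪P, R⟫ ≤ 0}

/-- `W ⊆ S^d` is hemispherical if it misses some closed hemisphere. -/
def hemispherical {d : ℕ} (W : Set (E d)) : Prop := ∃ P ∈ sph d, W ∩ hemi P = ∅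

/-- A hemispherical set is spherically convex if it contains the normalized segment
between any two of its points. -/
def sphConvex {d : ℕ} (W : Set (E d)) : Prop :=
  hemispherical W ∧ ∀ P ∈ W, ∀ Q ∈ W, ∀ t : ℝ, t ∈ Set.Icc (0 : ℝ) 1 →
    (‖t • P + (1 - t) • Q‖)⁻¹ • (t • P + (1 - t) • Q) ∈ W

/-- The spherical convex hull `s-conv(W)`: normalized convex combinations of
finitely many points of `W`. -/
def sconv {d : ℕ} (W : Set (E d)) : Set (E d) :=
  {x | ∃ (n : ℕ) (P : Fin n → E d) (l : Fin n → ℝ),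
    (∀ i, P i ∈ W) ∧ (∀ i, 0 ≤ l i) ∧ (∑ i, l i) = 1 ∧
    x = (‖∑ i, l i • P i‖)⁻¹ • (∑ i, l i • P i)}

/-- `Q` is a separation center of the points `P₁, …, P_m`. -/
def isSepCenter {d m : ℕ} (P : Fin m → E d) (Q : E d) : Prop :=
  Q ∈ sph d ∧ ∃ I J : Set (Fin m), I.Nonempty ∧ J.Nonempty ∧ I ∩ J = ∅ ∧
    I ∪ J = Set.univ ∧ (∀ i ∈ I, 0 ≤ ⟪Q, P i⟫) ∧ ∀ j ∈ J, ⟪Q, P j⟫ ≤ 0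

/-!
With at least two indices, a point `x` fails to be a separation center exactly when the `⟪x, v i⟫`
are all negative or all positive, and then `x` or `-x` is the center of a closed hemisphere missing
every `v i`. Conversely, for a finite family the condition `∃ i, 0 ≤ ⟪x, v i⟫` is closed in `x`, so
it passes from a dense set of separation centers to the whole sphere.
-/

section SeparationCenter

variable {ι V : Type*} [NormedAddCommGroup V] [InnerProductSpace ℝ V] {v : ι → V}

theorem exists_set_forall_le_and_forall_compl_le_iff {α : Type*} [LinearOrder α] [Nontrivial ι]
    {f : ι → α} {a : α} :
    (∃ s : Set ι, s.Nonempty ∧ sᶜ.Nonempty ∧ (∀ i ∈ s, a ≤ f i) ∧ ∀ j ∈ sᶜ, f j ≤ a) ↔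
      (∃ i, a ≤ f i) ∧ ∃ j, f j ≤ a := by
  constructor
  · rintro ⟨s, ⟨i, hi⟩, ⟨j, hj⟩, hle, hge⟩
    exact ⟨⟨i, hle i hi⟩, j, hge j hj⟩
  · rintro ⟨⟨i, hi⟩, j, hj⟩
    obtain ⟨i, j, hij, hi, hj⟩ : ∃ i j, i ≠ j ∧ a ≤ f i ∧ f j ≤ a := by
      rcases ne_or_eq i j with hij | rfl
      · exact ⟨i, j, hij, hi, hj⟩
      · obtain ⟨k, hk⟩ := exists_ne i
        rcases le_total a (f k) with hak | hka
        · exact ⟨k, i, hk, hak, hj⟩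
        · exact ⟨i, k, hk.symm, hi, hka⟩
    refine ⟨insert i {k | a < f k}, Set.insert_nonempty _ _, ⟨j, ?_⟩, ?_, ?_⟩
    · simp [hij.symm, hj]
    · rintro k (rfl | hk)
      exacts [hi, hk.le]
    · exact fun k hk => not_lt.mp fun hak => hk (Set.mem_insert_of_mem i hak)

/-- Separation centers of a family of vectors in a real inner product space: the two parts of the
partition are a set of indices and its complement, and `x` is not required to have norm one. -/
def IsSeparationCenter (v : ι → V) (x : V) : Prop :=
  ∃ s : Set ι, s.Nonempty ∧ sᶜ.Nonempty ∧ (∀ i ∈ s, 0 ≤ ⟪x, v i⟫) ∧ ∀ j ∈ sᶜ, ⟪x, v j⟫ ≤ 0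

theorem isSeparationCenter_iff [Nontrivial ι] {x : V} :
    IsSeparationCenter v x ↔ (∃ i, 0 ≤ ⟪x, v i⟫) ∧ ∃ j, ⟪x, v j⟫ ≤ 0 :=
  exists_set_forall_le_and_forall_compl_le_iff

theorem isClosed_setOf_exists_inner_nonneg [Finite ι] (v : ι → V) :
    IsClosed {x : V | ∃ i, 0 ≤ ⟪x, v i⟫} := by
  rw [Set.ofPred_exists]
  exact isClosed_iUnion_of_finite fun i => isClosed_le continuous_const (by fun_prop)

theorem stmt_14_general [Finite ι] [Nontrivial ι] (v : ι → V) :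
    (¬ ∃ x ∈ Metric.sphere (0 : V) 1, ∀ i, ⟪x, v i⟫ < 0) ↔
      Metric.sphere (0 : V) 1 ⊆
        closure {x | x ∈ Metric.sphere (0 : V) 1 ∧ IsSeparationCenter v x} := by
  push Not
  constructor
  · intro h x hx
    obtain ⟨j, hj⟩ : ∃ j, 0 ≤ ⟪-x, v j⟫ := h (-x) (by simpa using hx)
    have hj_nonpos : ⟪x, v j⟫ ≤ 0 := by simpa using hj
    exact subset_closure ⟨hx, isSeparationCenter_iff.mpr ⟨h x hx, j, hj_nonpos⟩⟩
  · intro h x hx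
    exact closure_minimal (fun _ hy => (isSeparationCenter_iff.mp hy.2).1)
      (isClosed_setOf_exists_inner_nonneg v) (h hx)

end SeparationCenter

section Sphere

variable {d m : ℕ} {P : Fin m → E d}

theorem sph_eq_sphere : sph d = Metric.sphere 0 1 := by
  ext x
  exact mem_sphere_zero_iff_norm.symm

theorem hemispherical_iff {W : Set (E d)} (hW : W ⊆ sph d) :
    hemispherical W ↔ ∃ x ∈ Metric.sphere 0 1, ∀ y ∈ W, ⟪x, y⟫ < 0 := by
  simp only [hemispherical, ← Set.disjoint_iff_inter_eq_empty, Set.disjoint_left, sph_eq_sphere]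
  refine exists_congr fun x => and_congr_right fun _ => forall₂_congr fun y hy => ?_
  simp [hemi, hW hy]

theorem isSepCenter_iff {Q : E d} :
    isSepCenter P Q ↔ Q ∈ Metric.sphere 0 1 ∧ IsSeparationCenter P Q := by
  rw [← sph_eq_sphere]
  refine and_congr_right fun _ => exists_congr fun I => ⟨?_, ?_⟩
  · rintro ⟨J, hI, hJ, hdisjoint, hcover, hnonneg, hnonpos⟩
    obtain rfl : Iᶜ = J :=
      IsCompl.compl_eq ⟨Set.disjoint_iff_inter_eq_empty.mpr hdisjoint, codisjoint_iff.mpr hcover⟩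
    exact ⟨hI, hJ, hnonneg, hnonpos⟩
  · rintro ⟨hI, hJ, hnonneg, hnonpos⟩
    exact ⟨Iᶜ, hI, hJ, Set.inter_compl_self I, Set.union_compl_self I, hnonneg, hnonpos⟩

end Sphere

/-- `{P₁,…,P_m}` is not hemispherical iff the separation center set of `P₁,…,P_m`
is dense in `S^d`. -/
theorem stmt_14 (d m : ℕ) (hm : 2 ≤ m) (P : Fin m → E d)
    (hP : ∀ i, P i ∈ sph d) (hinj : Function.Injective P) :
    ¬ hemispherical (Set.range P) ↔ sph d ⊆ closure {Q | isSepCenter P Q} := by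
  have : Nontrivial (Fin m) := Fin.nontrivial_iff_two_le.mpr hm
  simpa only [hemispherical_iff (Set.range_subset_iff.mpr hP), Set.forall_mem_range, sph_eq_sphere,
    isSepCenter_iff] using stmt_14_general P
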